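/- arXiv:2206.12087 — 2 statements merged into one kernel-verified Lean document; each statement's English description precedes it below -/
import Mathlib

section
/- For every n ≥ 0, the set of zigzag knight's paths of length 2n ending on the x-axis is in bijection with the set of Dyck paths of length 2(n+1). Explicitly, the map φ defined recursively by φ(ε)=UD, φ(E Ē β)=U φ(β) D, φ(N N̄ β)=U D φ(β), and φ(N Ē β E N̄ γ)=U φ(β) D φ(γ) is such a bijection. -/
/-!
Read a zigzag path two steps at a time. It must start with an up-step, so each block is one of
`N N̄`, `E Ē` (height change `0`), `N Ē` (change `+1`) and `E N̄` (change `-1`): a zigzag path of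
length `2n` ending on the axis is a Motzkin path of length `n` with two colours of level steps.
Cutting at the first return gives a decomposition tree (`Shape`), and so does the first-return
decomposition `U A D B` of a non-empty Dyck path, according to which of `A` and `B` are empty.

The map `φ` sends the zigzag path of a tree to the Dyck path of the same tree
(`apply_zigzagPath`). Hence it is enough that every zigzag path comes from a tree
(`exists_zigzagPath_eq`), that every non-empty Dyck path comes from a tree
(`exists_dyckPath_eq`), and that the Dyck path determines the tree (`dyckPath_injective`).
-/

open List

/-- The four right-moves of a knight. -/
def KnightSteps : Set (ℤ × ℤ) := {(2,1), (2,-1), (1,2), (1,-2)}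

/-- All partial sums of the y-coordinates are nonnegative (the path stays in ℕ²). -/
def NonnegHeights (p : List (ℤ × ℤ)) : Prop :=
  ∀ i, 0 ≤ ((p.take i).map Prod.snd).sum

/-- A partial knight's path: steps from `KnightSteps`, never going below the x-axis. -/
def IsPartialKnight (p : List (ℤ × ℤ)) : Prop :=
  (∀ s ∈ p, s ∈ KnightSteps) ∧ NonnegHeights p

/-- Any two consecutive steps have vertical components of opposite sign. -/
def IsZigzag (p : List (ℤ × ℤ)) : Prop :=
  List.Chain' (fun a b => a.2 * b.2 < 0) p

/-- A partial zigzag knight's path. -/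
def IsPartialZigzag (p : List (ℤ × ℤ)) : Prop :=
  IsPartialKnight p ∧ IsZigzag p

/-- The height of the endpoint of a path. -/
def pathHeight (p : List (ℤ × ℤ)) : ℤ := (p.map Prod.snd).sum

/-- The size (x-coordinate of the endpoint) of a path. -/
def pathSize (p : List (ℤ × ℤ)) : ℤ := (p.map Prod.fst).sum

/-- A zigzag knight's path ending on the x-axis. -/
def IsZigzagKnightPath (p : List (ℤ × ℤ)) : Prop :=
  IsPartialZigzag p ∧ pathHeight p = 0

/-- The last step of `p` exists and is an up-step. -/
def EndsWithUp (p : List (ℤ × ℤ)) : Prop :=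
  ∃ s, p.getLast? = some s ∧ 0 < s.2

/-- The last step of `p` exists and is a down-step. -/
def EndsWithDown (p : List (ℤ × ℤ)) : Prop :=
  ∃ s, p.getLast? = some s ∧ s.2 < 0

def Estep : ℤ × ℤ := (2, 1)
def Ebar  : ℤ × ℤ := (2, -1)
def Nstep : ℤ × ℤ := (1, 2)
def Nbar  : ℤ × ℤ := (1, -2)

/-- A Dyck path, encoded as a list of steps `1 = U` and `-1 = D` with nonnegative
partial sums, ending at height 0. -/
def IsDyck (d : List ℤ) : Prop :=
  (∀ x ∈ d, x = 1 ∨ x = -1) ∧ (∀ i, 0 ≤ (d.take i).sum) ∧ d.sum = 0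

namespace ZigzagDyck

/-- Starting from height `h`, the successive heights of the word `l` of vertical steps are all
nonnegative. -/
def NonnegFrom : ℤ → List ℤ → Prop
  | h, [] => 0 ≤ h
  | h, a :: l => 0 ≤ h ∧ NonnegFrom (h + a) l

lemma NonnegFrom.nonneg {h : ℤ} {l : List ℤ} (H : NonnegFrom h l) : 0 ≤ h := by
  cases l with
  | nil => exact H
  | cons a l => exact H.1

lemma nonnegFrom_iff (h : ℤ) (l : List ℤ) :
    NonnegFrom h l ↔ ∀ i, 0 ≤ h + (l.take i).sum := by
  induction l generalizing h with
  | nil => simp [NonnegFrom]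
  | cons a l ih =>
    rw [NonnegFrom, ih]
    constructor
    · rintro ⟨h0, H⟩ (_ | i)
      · simpa using h0
      · simpa [add_assoc] using H i
    · intro H
      exact ⟨by simpa using H 0, fun i => by simpa [add_assoc] using H (i + 1)⟩

lemma nonnegFrom_append (h : ℤ) (l m : List ℤ) :
    NonnegFrom h (l ++ m) ↔ NonnegFrom h l ∧ NonnegFrom (h + l.sum) m := by
  induction l generalizing h with
  | nil =>
    simp only [List.nil_append, List.sum_nil, add_zero, NonnegFrom]
    exact ⟨fun H => ⟨H.nonneg, H⟩, fun H => H.2⟩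
  | cons a l ih => simp [NonnegFrom, ih, and_assoc, add_assoc]

lemma NonnegFrom.mono {h k : ℤ} {l : List ℤ} (H : NonnegFrom h l) (hk : h ≤ k) :
    NonnegFrom k l := by
  rw [nonnegFrom_iff] at *
  intro i
  linarith [H i]

/-! ### Zigzag paths as words of up-down blocks -/

/-- Words made of blocks `a b` with `a ∈ {E, N}` and `b ∈ {Ē, N̄}`. -/
inductive Blocks : List (ℤ × ℤ) → Prop
  | nil : Blocks []
  | cons {a b : ℤ × ℤ} {p : List (ℤ × ℤ)} (ha : a = Estep ∨ a = Nstep)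
      (hb : b = Ebar ∨ b = Nbar) (hp : Blocks p) : Blocks (a :: b :: p)

lemma Blocks.append {p q : List (ℤ × ℤ)} (hp : Blocks p) (hq : Blocks q) : Blocks (p ++ q) := by
  induction hp with
  | nil => exact hq
  | cons ha hb _ ih => exact .cons ha hb ih

/-- The description of zigzag paths ending on the axis that is convenient for induction. -/
def IsZig (p : List (ℤ × ℤ)) : Prop :=
  Blocks p ∧ NonnegFrom 0 (p.map Prod.snd) ∧ (p.map Prod.snd).sum = 0

lemma Blocks.mem_knightSteps {p : List (ℤ × ℤ)} (hp : Blocks p) :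
    ∀ s ∈ p, s ∈ KnightSteps := by
  induction hp with
  | nil => simp
  | cons ha hb _ ih =>
    simp only [List.mem_cons, forall_eq_or_imp]
    refine ⟨?_, ?_, ih⟩
    · rcases ha with rfl | rfl <;> simp [KnightSteps, Estep, Nstep]
    · rcases hb with rfl | rfl <;> simp [KnightSteps, Ebar, Nbar]

lemma Blocks.isZigzag {p : List (ℤ × ℤ)} (hp : Blocks p) : IsZigzag p := by
  unfold IsZigzag
  induction hp with
  | nil => exact List.isChain_nil
  | cons ha hb hp ih =>
    refine List.isChain_cons_cons.2 ⟨?_, ?_⟩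
    · rcases ha with rfl | rfl <;> rcases hb with rfl | rfl <;> decide
    · cases hp with
      | nil => exact List.isChain_singleton _
      | cons hc _ _ =>
        refine List.isChain_cons_cons.2 ⟨?_, ih⟩
        rcases hb with rfl | rfl <;> rcases hc with rfl | rfl <;> decide

lemma IsZig.isZigzagKnightPath {p : List (ℤ × ℤ)} (hp : IsZig p) : IsZigzagKnightPath p := by
  refine ⟨⟨⟨hp.1.mem_knightSteps, fun i => ?_⟩, hp.1.isZigzag⟩, hp.2.2⟩
  have := (nonnegFrom_iff _ _).1 hp.2.1 i
  rwa [zero_add, ← List.map_take] at this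

lemma up_of_mem {s : ℤ × ℤ} (hs : s ∈ KnightSteps) (h : 0 ≤ s.2) : s = Estep ∨ s = Nstep := by
  rcases hs with rfl | rfl | rfl | rfl <;> simp_all [Estep, Nstep]

lemma down_of_mem {s : ℤ × ℤ} (hs : s ∈ KnightSteps) (h : s.2 ≤ 0) : s = Ebar ∨ s = Nbar := by
  rcases hs with rfl | rfl | rfl | rfl <;> simp_all [Ebar, Nbar]

/-- In a word of even length, alternation propagates the block structure from an initial up-step to
the whole word. -/
lemma blocks_of_isZigzag (n : ℕ) (p : List (ℤ × ℤ)) (hl : p.length = 2 * n)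
    (hs : ∀ s ∈ p, s ∈ KnightSteps) (hz : IsZigzag p) (hu : ∀ a ∈ p.head?, 0 ≤ a.2) :
    Blocks p := by
  induction n generalizing p with
  | zero =>
    obtain rfl : p = [] := List.length_eq_zero_iff.1 hl
    exact .nil
  | succ n ih =>
    match p, hl with
    | [a], hl => simp at hl; omega
    | a :: b :: q, hl =>
      have ha0 : 0 ≤ a.2 := hu a rfl
      obtain ⟨hab, hz'⟩ := List.isChain_cons_cons.1 hz
      have hb0 : b.2 < 0 := by
        by_contra! hb
        exact absurd hab (not_lt.2 (mul_nonneg ha0 hb))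
      refine .cons (up_of_mem (hs a (by simp)) ha0) (down_of_mem (hs b (by simp)) hb0.le)
        (ih q (by simp at hl; omega) (fun s h => hs s (by simp [h])) ?_ ?_)
      · exact hz'.tail
      · intro c hc
        cases q with
        | nil => simp at hc
        | cons c' q =>
          obtain rfl : c' = c := by simpa using hc
          have := (List.isChain_cons_cons.1 hz').1
          by_contra! hc'
          exact absurd this (not_lt.2 (mul_pos_of_neg_of_neg hb0 hc').le)

lemma isZig_of_isZigzagKnightPath {n : ℕ} {p : List (ℤ × ℤ)} (hp : IsZigzagKnightPath p)
    (hl : p.length = 2 * n) : IsZig p := by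
  obtain ⟨⟨⟨hs, hh⟩, hz⟩, h0⟩ := hp
  have hN : NonnegFrom 0 (p.map Prod.snd) := by
    rw [nonnegFrom_iff]
    intro i
    rw [zero_add, ← List.map_take]
    exact hh i
  refine ⟨blocks_of_isZigzag n p hl hs hz ?_, hN, h0⟩
  intro a ha
  cases p with
  | nil => simp at ha
  | cons b q =>
    obtain rfl : b = a := by simpa using ha
    simpa using hN.2.nonneg

/-! ### Decomposition trees and their two readings -/

/-- Decomposition trees: the four cases of the recursion defining `φ`. -/
inductive Shape
  | empty : Shape
  | lift : Shape → Shape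
  | flat : Shape → Shape
  | fork : Shape → Shape → Shape

/-- The zigzag path of a decomposition tree. -/
def zigzagPath : Shape → List (ℤ × ℤ)
  | .empty => []
  | .lift s => Estep :: Ebar :: zigzagPath s
  | .flat s => Nstep :: Nbar :: zigzagPath s
  | .fork s t => Nstep :: Ebar :: (zigzagPath s ++ Estep :: Nbar :: zigzagPath t)

/-- The Dyck path of a decomposition tree. -/
def dyckPath : Shape → List ℤ
  | .empty => [1, -1]
  | .lift s => 1 :: (dyckPath s ++ [-1])
  | .flat s => 1 :: -1 :: dyckPath s
  | .fork s t => 1 :: (dyckPath s ++ -1 :: dyckPath t)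

lemma length_dyckPath (s : Shape) : (dyckPath s).length = (zigzagPath s).length + 2 := by
  induction s <;> simp [dyckPath, zigzagPath] <;> omega

lemma dyckPath_ne_nil (s : Shape) : dyckPath s ≠ [] := by
  cases s <;> simp [dyckPath]

lemma isZig_zigzagPath (s : Shape) : IsZig (zigzagPath s) := by
  induction s with
  | empty => exact ⟨.nil, le_rfl, rfl⟩
  | lift s ih =>
    refine ⟨.cons (.inl rfl) (.inl rfl) ih.1, ?_, ?_⟩
    · simpa [zigzagPath, NonnegFrom, Estep, Ebar] using ih.2.1
    · simpa [zigzagPath, Estep, Ebar] using ih.2.2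
  | flat s ih =>
    refine ⟨.cons (.inr rfl) (.inr rfl) ih.1, ?_, ?_⟩
    · simpa [zigzagPath, NonnegFrom, Nstep, Nbar] using ih.2.1
    · simpa [zigzagPath, Nstep, Nbar] using ih.2.2
  | fork s t ihs iht =>
    refine ⟨.cons (.inr rfl) (.inl rfl) (ihs.1.append (.cons (.inl rfl) (.inr rfl) iht.1)),
      ?_, ?_⟩
    · have h := ihs.2.1.mono (show (0 : ℤ) ≤ 1 by norm_num)
      simp [zigzagPath, NonnegFrom, nonnegFrom_append, Nstep, Ebar, Estep, Nbar, ihs.2.2, h,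
        iht.2.1]
    · simp [zigzagPath, Nstep, Ebar, Estep, Nbar, ihs.2.2, iht.2.2]

/-- The Dyck condition with prefix sums replaced by `NonnegFrom`. -/
lemma isDyck_iff (d : List ℤ) :
    IsDyck d ↔ (∀ x ∈ d, x = 1 ∨ x = -1) ∧ NonnegFrom 0 d ∧ d.sum = 0 := by
  simp [IsDyck, nonnegFrom_iff]

lemma isDyck_nil : IsDyck [] := by simp [IsDyck]

/-- `U A D B` is Dyck when `A` and `B` are. -/
lemma isDyck_node {A B : List ℤ} (hA : IsDyck A) (hB : IsDyck B) :
    IsDyck (1 :: (A ++ -1 :: B)) := by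
  rw [isDyck_iff] at *
  refine ⟨?_, ?_, by simp [hA.2.2, hB.2.2]⟩
  · intro x hx
    simp only [List.mem_cons, List.mem_append] at hx
    rcases hx with h | h | h | h
    exacts [.inl h, hA.1 x h, .inr h, hB.1 x h]
  · have h := hA.2.1.mono (show (0 : ℤ) ≤ 1 by norm_num)
    simp [NonnegFrom, nonnegFrom_append, hA.2.2, h, hB.2.1]

lemma isDyck_dyckPath (s : Shape) : IsDyck (dyckPath s) := by
  induction s with
  | empty => exact isDyck_node isDyck_nil isDyck_nil
  | lift s ih => exact isDyck_node ih isDyck_nil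
  | flat s ih => exact isDyck_node isDyck_nil ih
  | fork s t ihs iht => exact isDyck_node ihs iht

/-! ### Uniqueness of the first-return decomposition of a Dyck path -/

/-- A Dyck path cannot have `A D` as a prefix when `A` is Dyck, the prefix sum being `-1`. -/
lemma not_isDyck_append {A c : List ℤ} (hA : IsDyck A) : ¬ IsDyck (A ++ -1 :: c) := by
  intro h
  rw [isDyck_iff, nonnegFrom_append] at h
  have := h.2.1.2.2.nonneg
  rw [hA.2.2] at this
  norm_num at this

lemma node_inj {A A' B B' : List ℤ} (hA : IsDyck A) (hA' : IsDyck A')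
    (h : A ++ -1 :: B = A' ++ -1 :: B') : A = A' ∧ B = B' := by
  rcases List.append_eq_append_iff.1 h with ⟨c, rfl, hc⟩ | ⟨c, rfl, hc⟩
  · cases c with
    | nil => simpa using hc
    | cons x c =>
      obtain ⟨rfl, -⟩ : -1 = x ∧ _ := by simpa using hc
      exact absurd hA' (not_isDyck_append hA)
  · cases c with
    | nil => simpa [eq_comm] using hc
    | cons x c =>
      obtain ⟨rfl, -⟩ : -1 = x ∧ _ := by simpa using hc
      exact absurd hA (not_isDyck_append hA')

/-- The part `A` of `dyckPath s = U A D B`. -/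
def inner : Shape → List ℤ
  | .empty => []
  | .lift s => dyckPath s
  | .flat _ => []
  | .fork s _ => dyckPath s

/-- The part `B` of `dyckPath s = U A D B`. -/
def outer : Shape → List ℤ
  | .empty => []
  | .lift _ => []
  | .flat s => dyckPath s
  | .fork _ t => dyckPath t

lemma dyckPath_eq_node (s : Shape) : dyckPath s = 1 :: (inner s ++ -1 :: outer s) := by
  cases s <;> rfl

lemma isDyck_inner (s : Shape) : IsDyck (inner s) := by
  cases s
  exacts [isDyck_nil, isDyck_dyckPath _, isDyck_nil, isDyck_dyckPath _]

lemma dyckPath_injective : Function.Injective dyckPath := by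
  intro s
  induction s with
  | empty =>
    intro t h
    rw [dyckPath_eq_node, dyckPath_eq_node t, List.cons_inj_right] at h
    have := node_inj (isDyck_inner _) (isDyck_inner _) h
    cases t <;> simp_all [inner, outer, dyckPath_ne_nil, (dyckPath_ne_nil _).symm]
  | lift s ih =>
    intro t h
    rw [dyckPath_eq_node, dyckPath_eq_node t, List.cons_inj_right] at h
    have := node_inj (isDyck_inner _) (isDyck_inner _) h
    cases t with
    | lift t => rw [ih this.1]
    | _ => simp_all [inner, outer, dyckPath_ne_nil, (dyckPath_ne_nil _).symm]
  | flat s ih =>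
    intro t h
    rw [dyckPath_eq_node, dyckPath_eq_node t, List.cons_inj_right] at h
    have := node_inj (isDyck_inner _) (isDyck_inner _) h
    cases t with
    | flat t => rw [ih this.2]
    | _ => simp_all [inner, outer, dyckPath_ne_nil, (dyckPath_ne_nil _).symm]
  | fork s s' ih ih' =>
    intro t h
    rw [dyckPath_eq_node, dyckPath_eq_node t, List.cons_inj_right] at h
    have := node_inj (isDyck_inner _) (isDyck_inner _) h
    cases t with
    | fork t t' => rw [ih this.1, ih' this.2]
    | _ => simp_all [inner, outer, dyckPath_ne_nil]

/-! ### Existence of the first-return decompositions -/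

/-- A word of steps `±1` from height `h ≥ 0` to a negative height has a first step from `0` to
`-1`. -/
lemma exists_first_neg (l : List ℤ) (h : ℤ) (h0 : 0 ≤ h) (hs : ∀ x ∈ l, x = 1 ∨ x = -1)
    (hneg : h + l.sum < 0) :
    ∃ A B, l = A ++ -1 :: B ∧ NonnegFrom h A ∧ h + A.sum = 0 := by
  induction l generalizing h with
  | nil => simp at hneg; omega
  | cons a l ih =>
    have ha := hs a (by simp)
    by_cases hk : h + a < 0
    · obtain rfl : a = -1 := by omega
      exact ⟨[], l, rfl, h0, by simp; omega⟩
    · obtain ⟨A, B, rfl, hA, hA0⟩ := ih (h + a) (not_lt.1 hk) (fun x hx => hs x (by simp [hx]))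
        (by simpa [add_assoc] using hneg)
      exact ⟨a :: A, B, rfl, ⟨h0, hA⟩, by simpa [add_assoc] using hA0⟩

/-- A word of up-down blocks from height `h ≥ 0` to a negative height has a first block leading
to `-1`, and this block is `E N̄` from height `0`. -/
lemma exists_first_neg_block {p : List (ℤ × ℤ)} (hp : Blocks p) (h : ℤ) (h0 : 0 ≤ h)
    (hneg : h + (p.map Prod.snd).sum < 0) :
    ∃ A B, p = A ++ Estep :: Nbar :: B ∧ Blocks A ∧ Blocks B ∧
      NonnegFrom h (A.map Prod.snd) ∧ h + (A.map Prod.snd).sum = 0 := by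
  induction hp generalizing h with
  | nil => simp at hneg; omega
  | @cons a b p ha hb hp ih =>
    have ha1 : a.2 = 1 ∧ a = Estep ∨ a.2 = 2 := by rcases ha with rfl | rfl <;> simp [Estep, Nstep]
    have hb1 : b.2 = -1 ∨ b.2 = -2 ∧ b = Nbar := by rcases hb with rfl | rfl <;> simp [Ebar, Nbar]
    by_cases hk : h + a.2 + b.2 < 0
    · obtain rfl : a = Estep := by
        rcases ha1 with h | h
        · exact h.2
        · omega
      obtain rfl : b = Nbar := by
        rcases hb1 with h | h
        · simp [Estep] at hk; omega
        · exact h.2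
      exact ⟨[], p, rfl, .nil, hp, h0, by simp [Estep, Nbar] at hk ⊢; omega⟩
    · obtain ⟨A, B, rfl, hA, hB, hN, hA0⟩ := ih (h + a.2 + b.2) (not_lt.1 hk)
        (by simpa [add_assoc] using hneg)
      exact ⟨a :: b :: A, B, rfl, .cons ha hb hA, hB, ⟨h0, by omega, hN⟩,
        by simpa [add_assoc] using hA0⟩

lemma exists_zigzagPath_eq (n : ℕ) (p : List (ℤ × ℤ)) (hn : p.length ≤ n) (hp : IsZig p) :
    ∃ s, zigzagPath s = p := by
  induction n generalizing p with
  | zero =>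
    exact ⟨.empty, (List.length_eq_zero_iff.1 (Nat.le_zero.1 hn)).symm⟩
  | succ n ih =>
    obtain ⟨hb, hN, h0⟩ := hp
    cases hb with
    | nil => exact ⟨.empty, rfl⟩
    | @cons a b q ha hb hq =>
      simp only [List.length_cons] at hn
      rcases ha with rfl | rfl <;> rcases hb with rfl | rfl
      · obtain ⟨s, rfl⟩ := ih q (by omega)
          ⟨hq, by simpa [NonnegFrom, Estep, Ebar] using hN, by simpa [Estep, Ebar] using h0⟩
        exact ⟨.lift s, rfl⟩
      · -- The block `E N̄` would lead from the axis to height `-1`.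
        have := hN.2.2.nonneg
        simp [Estep, Nbar] at this
      · obtain ⟨A, B, rfl, hA, hB, hNA, hA0⟩ := exists_first_neg_block hq 0 le_rfl
          (by simp [Nstep, Ebar] at h0; omega)
        rw [zero_add] at hA0
        simp [Nstep, Ebar, Estep, Nbar, hA0] at h0
        simp [NonnegFrom, nonnegFrom_append, Nstep, Ebar, Estep, Nbar, hA0] at hN
        simp only [List.length_append, List.length_cons] at hn
        obtain ⟨s, rfl⟩ := ih A (by omega) ⟨hA, hNA, hA0⟩
        obtain ⟨t, rfl⟩ := ih B (by omega) ⟨hB, hN.2, h0⟩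
        exact ⟨.fork s t, rfl⟩
      · obtain ⟨s, rfl⟩ := ih q (by omega)
          ⟨hq, by simpa [NonnegFrom, Nstep, Nbar] using hN, by simpa [Nstep, Nbar] using h0⟩
        exact ⟨.flat s, rfl⟩

lemma exists_node_eq {d : List ℤ} (hd : IsDyck d) (hne : d ≠ []) :
    ∃ A B, d = 1 :: (A ++ -1 :: B) ∧ IsDyck A ∧ IsDyck B := by
  rw [isDyck_iff] at hd
  obtain ⟨hs, hN, h0⟩ := hd
  cases d with
  | nil => exact absurd rfl hne
  | cons a l =>
    obtain rfl : a = 1 := by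
      have h1 := hs a (by simp)
      have h2 := hN.2.nonneg
      omega
    obtain ⟨A, B, rfl, hA, hA0⟩ := exists_first_neg l 0 le_rfl (fun x hx => hs x (by simp [hx]))
      (by simp at h0; omega)
    rw [zero_add] at hA0
    simp [hA0] at h0
    simp [NonnegFrom, nonnegFrom_append, hA0] at hN
    exact ⟨A, B, rfl, (isDyck_iff A).2 ⟨fun x hx => hs x (by simp [hx]), hA, hA0⟩,
      (isDyck_iff B).2 ⟨fun x hx => hs x (by simp [hx]), hN.2, h0⟩⟩

lemma exists_dyckPath_eq (n : ℕ) (d : List ℤ) (hn : d.length ≤ n) (hd : IsDyck d)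
    (hne : d ≠ []) : ∃ s, dyckPath s = d := by
  induction n generalizing d with
  | zero => exact absurd (List.length_eq_zero_iff.1 (Nat.le_zero.1 hn)) hne
  | succ n ih =>
    obtain ⟨A, B, rfl, hA, hB⟩ := exists_node_eq hd hne
    simp only [List.length_append, List.length_cons] at hn
    by_cases hA' : A = [] <;> by_cases hB' : B = []
    · subst hA' hB'
      exact ⟨.empty, rfl⟩
    · subst hA'
      obtain ⟨t, rfl⟩ := ih B (by omega) hB hB'
      exact ⟨.flat t, rfl⟩
    · subst hB'
      obtain ⟨s, rfl⟩ := ih A (by omega) hA hA'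
      exact ⟨.lift s, rfl⟩
    · obtain ⟨s, rfl⟩ := ih A (by omega) hA hA'
      obtain ⟨t, rfl⟩ := ih B (by omega) hB hB'
      exact ⟨.fork s t, rfl⟩

/-! ### The map `φ` on decomposition trees -/

/-- The recursion for `φ` says exactly that it turns the zigzag reading of a tree into the Dyck
reading. -/
lemma apply_zigzagPath (φ : List (ℤ × ℤ) → List ℤ)
    (h0 : φ [] = [1, -1])
    (h1 : ∀ β, IsZigzagKnightPath β →
        φ (Estep :: Ebar :: β) = 1 :: (φ β ++ [-1]))
    (h2 : ∀ β, IsZigzagKnightPath β →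
        φ (Nstep :: Nbar :: β) = 1 :: -1 :: φ β)
    (h3 : ∀ β γ, IsZigzagKnightPath β → IsZigzagKnightPath γ →
        φ (Nstep :: Ebar :: (β ++ Estep :: Nbar :: γ)) = 1 :: (φ β ++ -1 :: φ γ))
    (s : Shape) : φ (zigzagPath s) = dyckPath s := by
  have hz (t : Shape) := (isZig_zigzagPath t).isZigzagKnightPath
  induction s with
  | empty => exact h0
  | lift s ih => rw [zigzagPath, h1 _ (hz s), ih, dyckPath]
  | flat s ih => rw [zigzagPath, h2 _ (hz s), ih, dyckPath]
  | fork s t ihs iht => rw [zigzagPath, h3 _ _ (hz s) (hz t), ihs, iht, dyckPath]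

end ZigzagDyck

open ZigzagDyck

/-- the map φ with φ(ε)=UD, φ(E Ē β)=U φ(β) D, φ(N N̄ β)=U D φ(β),
φ(N Ē β E N̄ γ)=U φ(β) D φ(γ) is a bijection from zigzag knight's paths of length 2n
ending on the x-axis to Dyck paths of length 2(n+1). -/
theorem stmt7 (φ : List (ℤ × ℤ) → List ℤ)
    (h0 : φ [] = [1, -1])
    (h1 : ∀ β, IsZigzagKnightPath β →
        φ (Estep :: Ebar :: β) = 1 :: (φ β ++ [-1]))
    (h2 : ∀ β, IsZigzagKnightPath β →
        φ (Nstep :: Nbar :: β) = 1 :: -1 :: φ β)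
    (h3 : ∀ β γ, IsZigzagKnightPath β → IsZigzagKnightPath γ →
        φ (Nstep :: Ebar :: (β ++ Estep :: Nbar :: γ)) = 1 :: (φ β ++ -1 :: φ γ))
    (n : ℕ) :
    Set.BijOn φ {p | IsZigzagKnightPath p ∧ p.length = 2 * n}
      {d | IsDyck d ∧ d.length = 2 * (n + 1)} := by
  have hφ := apply_zigzagPath φ h0 h1 h2 h3
  have hz : ∀ p, IsZigzagKnightPath p ∧ p.length = 2 * n → ∃ s, zigzagPath s = p :=
    fun p hp => exists_zigzagPath_eq _ p le_rfl (isZig_of_isZigzagKnightPath hp.1 hp.2)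
  refine ⟨?_, ?_, ?_⟩
  · intro p hp
    obtain ⟨s, rfl⟩ := hz p hp
    have hl := length_dyckPath s
    rw [hp.2] at hl
    rw [Set.mem_ofPred_eq, hφ]
    exact ⟨isDyck_dyckPath s, by omega⟩
  · intro p hp q hq hpq
    obtain ⟨s, rfl⟩ := hz p hp
    obtain ⟨t, rfl⟩ := hz q hq
    rw [hφ, hφ] at hpq
    rw [dyckPath_injective hpq]
  · rintro d ⟨hd, hl⟩
    obtain ⟨s, rfl⟩ := exists_dyckPath_eq _ d le_rfl hd (by rintro rfl; simp at hl)
    have hl' := length_dyckPath s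
    exact ⟨zigzagPath s, ⟨(isZig_zigzagPath s).isZigzagKnightPath, by omega⟩, hφ s⟩
end

section
/- For every n ≥ 0, the number of lattice paths in ℕ² of length n starting at (0,0), ending on the x-axis, with steps from {(1,1),(1,-1),(1,2),(1,-2)} (basketball walks), equals (1/(n+1))·Σ_{i=0}^{⌊n/2⌋} binom(2n+2, i)·binom(n−i−1, n−2i). -/
/-!
The proof is the kernel method combined with Lagrange inversion, arranged so that neither Puiseux
series nor a compositional inverse appears.

Let `c n h` be the number of walks of length `n` that start at height `h`, stay nonnegative and end
at `0`. Splitting off the first step gives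
`c (n+1) h = c n (h-2) + c n (h-1) + c n (h+1) + c n (h+2)`, with `c n h = 0` for `h < 0`.
If `z` marks the length and `u₁`, `u₂` are the small roots of the kernel
`1 = z (u⁻² + u⁻¹ + u + u²)`, then in terms of `t = -u₁u₂` one has `s := u₁ + u₂ = t / (1 - t)` and
`t = z φ(t)` with `φ = 1 + s² + t² = (1 + s t)²`, and the generating function of `c · h` is
`φ K_h`, where `K_0 = 1`, `K_1 = s`, `K_{h+2} = s K_{h+1} + t K_h`.

By Lagrange inversion the coefficient of `zⁿ` in `H(t)` is the coefficient of `tⁿ` in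
`H φⁿ⁻¹ (φ - t · dφ/dt)`. So it suffices to check that the coefficients of `tⁿ` in
`K_h φⁿ (φ - t · dφ/dt)` obey the recurrence of `c`. This follows from
`φ K_h = [h = 0] + t (K_{h-2} + K_{h-1} + K_{h+1} + K_{h+2})` together with the vanishing of the
coefficient of `tⁿ⁺¹` in `φⁿ (φ - t · dφ/dt)` (`coeff_lagrange`). At `h = 0` the same lemma turns the
coefficient into `1 / (n + 1)` times the coefficient of `tⁿ` in
`φⁿ⁺¹ = (1 + t² / (1 - t))²ⁿ⁺²`, and expanding by the binomial theorem gives the sum.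
-/


open List

/-- Steps of a basketball walk. -/
def BasketballSteps : Set (ℤ × ℤ) := {(1,1), (1,-1), (1,2), (1,-2)}

/-- A basketball walk: lattice path in ℕ² from the origin to the x-axis. -/
def IsBasketballWalk (p : List (ℤ × ℤ)) : Prop :=
  (∀ s ∈ p, s ∈ BasketballSteps) ∧ NonnegHeights p ∧ pathHeight p = 0

/-- Binomial coefficient with integer arguments: `0` when `b < 0` or `0 ≤ a < b`,
`1` when `b = 0` (in particular `gchoose (-1) 0 = 1`). -/
def gchoose (a b : ℤ) : ℤ :=
  if 0 ≤ b ∧ b ≤ a then a.toNat.choose b.toNat else if b = 0 then 1 else 0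

namespace Basketball

open PowerSeries

/-- The walk steps as a finset. -/
def steps : Finset (ℤ × ℤ) := {(1,1), (1,-1), (1,2), (1,-2)}

/-- The walks of length `n` from height `h` to height `0` that stay nonnegative, built by
choosing the first step. -/
def walks : ℕ → ℤ → Finset (List (ℤ × ℤ))
  | 0, h => if h = 0 then {[]} else ∅
  | n + 1, h =>
    if h < 0 then ∅ else steps.biUnion fun s => (walks n (h + s.2)).image (List.cons s)

theorem mem_walks (n : ℕ) (h : ℤ) (p : List (ℤ × ℤ)) :
    p ∈ walks n h ↔ (∀ s ∈ p, s ∈ BasketballSteps) ∧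
      (∀ i, 0 ≤ h + ((p.take i).map Prod.snd).sum) ∧ h + (p.map Prod.snd).sum = 0 ∧
      p.length = n := by
  induction n generalizing h p with
  | zero =>
    rw [walks, List.length_eq_zero_iff]
    constructor
    · intro hp
      split_ifs at hp with h0
      · simp only [Finset.mem_singleton] at hp
        simp [hp, h0]
      · simp at hp
    · rintro ⟨-, -, h0, rfl⟩
      simp only [List.map_nil, List.sum_nil, add_zero] at h0
      simp [h0]
  | succ n ih =>
    rw [walks]
    constructor
    · intro hp
      split_ifs at hp with h0
      · simp at hp
      · simp only [Finset.mem_biUnion, Finset.mem_image, ih] at hp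
        obtain ⟨s, hs, q, ⟨h1, h2, h3, h4⟩, rfl⟩ := hp
        refine ⟨?_, ?_, ?_, by simp [h4]⟩
        · intro x hx
          rcases List.mem_cons.1 hx with rfl | hx
          · simpa [steps, BasketballSteps] using hs
          · exact h1 x hx
        · rintro (_ | i)
          · simpa using h0
          · have := h2 i
            simp only [List.take_succ_cons, List.map_cons, List.sum_cons]
            linarith
        · simp only [List.map_cons, List.sum_cons]
          linarith
    · rintro ⟨h1, h2, h3, h4⟩
      have h0 : ¬ h < 0 := by simpa using h2 0
      rw [if_neg h0]
      match p, h4 with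
      | s :: q, h4 =>
        simp only [Finset.mem_biUnion, Finset.mem_image, ih]
        refine ⟨s, ?_, q, ⟨fun x hx => h1 x (List.mem_cons_of_mem _ hx), fun i => ?_, ?_, ?_⟩, rfl⟩
        · simpa [steps, BasketballSteps] using h1 s List.mem_cons_self
        · have := h2 (i + 1)
          simp only [List.take_succ_cons, List.map_cons, List.sum_cons] at this
          linarith
        · simp only [List.map_cons, List.sum_cons] at h3
          linarith
        · simpa using h4

theorem card_walks_neg (n : ℕ) {h : ℤ} (hh : h < 0) : (walks n h).card = 0 := by
  cases n with
  | zero => simp [walks, hh.ne]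
  | succ n => simp [walks, hh]

theorem card_walks_succ (n : ℕ) {h : ℤ} (hh : 0 ≤ h) :
    (walks (n + 1) h).card = (walks n (h + 1)).card + (walks n (h - 1)).card
      + (walks n (h + 2)).card + (walks n (h - 2)).card := by
  rw [walks, if_neg (not_lt.2 hh), Finset.card_biUnion]
  · simp only [Finset.card_image_of_injective _ List.cons_injective]
    simp [steps, add_assoc, sub_eq_add_neg]
  · intro a _ b _ hab
    rw [Function.onFun, Finset.disjoint_left]
    simp only [Finset.mem_image]
    rintro _ ⟨q, _, rfl⟩ ⟨r, _, hr⟩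
    exact hab (List.cons.inj hr).1.symm

/-- The power series `s = t / (1 - t)`, the sum of the small roots of the kernel. -/
noncomputable def s : PowerSeries ℚ := X * mk 1

/-- The Lagrange kernel `φ = (1 + s t)²`, for which `t = z φ(t)`. -/
noncomputable def φ : PowerSeries ℚ := (1 + s * X) ^ 2

/-- The quotient of the generating function of walks from height `h` by the one from height `0`. -/
noncomputable def K : ℕ → PowerSeries ℚ
  | 0 => 1
  | 1 => s
  | h + 2 => s * K (h + 1) + X * K h

theorem s_mul : s * (1 - X) = X := by
  rw [s, mul_assoc, PowerSeries.mk_one_mul_one_sub_eq_one, mul_one]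

theorem kernel_zero : φ * K 0 = 1 + X * (K 1 + K 2) := by
  simp only [K, φ]
  linear_combination (X - s * X) * s_mul

theorem kernel_one : φ * K 1 = X * (K 0 + K 2 + K 3) := by
  simp only [K, φ]
  linear_combination (1 + X + s * X - s ^ 2 * X) * s_mul

/-- The kernel identity at generic heights: `u² - s u - t` divides the cleared kernel polynomial
`φ u² - t (1 + u + u³ + u⁴)`, and `K` satisfies the linear recurrence with characteristic polynomial
`u² - s u - t`. -/
theorem kernel_add_two (h : ℕ) :
    φ * K (h + 2) = X * (K h + K (h + 1) + K (h + 3) + K (h + 4)) := by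
  simp only [K, φ]
  linear_combination ((X - s * X) * (s * K (h + 1) + X * K h) + (1 + X) * K (h + 1)) * s_mul

/-- The power series `φⁿ (φ - t · dφ/dt)`, whose coefficients of `tⁿ` after multiplication by `K h` are
the coefficients of `zⁿ` in `φ K_h`. -/
noncomputable def lag (n : ℕ) : PowerSeries ℚ := φ ^ n * (φ - X * derivative ℚ φ)

/-- The coefficient of `tᵐ` in `t · d(φⁿ⁺¹)/dt = (n + 1) t φⁿ · dφ/dt` is `m` times that of
`φⁿ⁺¹`; comparison with the definition of `lag n` gives the claim. The cases used are `m = n + 1`,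
where the coefficient of `lag n` vanishes, and `m = n`. -/
theorem coeff_lagrange (n m : ℕ) :
    ((n : ℚ) + 1) * coeff m (lag n) = (n + 1 - m) * coeff m (φ ^ (n + 1)) := by
  have hd : coeff m (X * derivative ℚ (φ ^ (n + 1))) = m * coeff m (φ ^ (n + 1)) := by
    cases m with
    | zero => simp
    | succ m =>
      rw [coeff_succ_X_mul, PowerSeries.coeff_derivative]
      push_cast
      ring
  have h2 : C ((n : ℚ) + 1) * lag n
      = C ((n : ℚ) + 1) * φ ^ (n + 1) - X * derivative ℚ (φ ^ (n + 1)) := by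
    rw [Derivation.leibniz_pow, lag]
    simp only [map_add, map_natCast, map_one, nsmul_eq_mul, smul_eq_mul, Nat.add_sub_cancel]
    push_cast
    ring
  have h3 := congrArg (coeff m) h2
  rw [map_sub, coeff_C_mul, coeff_C_mul, hd] at h3
  linarith

theorem constantCoeff_K (h : ℕ) : constantCoeff (K h) = if h = 0 then 1 else 0 := by
  induction h using Nat.strong_induction_on with
  | _ h ih =>
    match h with
    | 0 => simp [K]
    | 1 => simp [K, s]
    | h + 2 => simp [K, s]

theorem lag_succ (n : ℕ) : lag (n + 1) = φ * lag n := by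
  rw [lag, lag]; ring

/-- The numbers of walks and the Lagrange coefficients satisfy the same recurrence. -/
theorem card_walks (n h : ℕ) : ((walks n h).card : ℚ) = coeff n (K h * lag n) := by
  induction n generalizing h with
  | zero =>
    have h1 : constantCoeff φ = 1 := by simp [φ, s]
    rw [coeff_zero_eq_constantCoeff_apply, map_mul, constantCoeff_K]
    by_cases hh : h = 0
    · simp [walks, lag, hh, h1]
    · simp [walks, hh]
  | succ n ih =>
    rw [card_walks_succ n (Int.natCast_nonneg h), lag_succ, ← mul_assoc, mul_comm (K h)]
    match h with
    | 0 =>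
      have h1 : coeff (n + 1) (lag n) = 0 := by
        have := coeff_lagrange n (n + 1)
        push_cast at this
        rw [sub_self, zero_mul] at this
        exact (mul_eq_zero.1 this).resolve_left (by positivity)
      rw [kernel_zero, card_walks_neg n (h := ((0 : ℕ) : ℤ) - 1) (by norm_num),
        card_walks_neg n (h := ((0 : ℕ) : ℤ) - 2) (by norm_num),
        add_mul, map_add, one_mul, h1, mul_assoc, coeff_succ_X_mul, add_mul, map_add,
        ← ih, ← ih]
      push_cast
      ring_nf
    | 1 =>
      rw [kernel_one, card_walks_neg n (h := ((1 : ℕ) : ℤ) - 2) (by norm_num),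
        mul_assoc, coeff_succ_X_mul, add_mul, add_mul, map_add, map_add, ← ih, ← ih, ← ih]
      push_cast
      ring_nf
    | h + 2 =>
      rw [kernel_add_two, mul_assoc, coeff_succ_X_mul, add_mul, add_mul, add_mul, map_add,
        map_add, map_add, ← ih, ← ih, ← ih, ← ih]
      push_cast
      ring_nf

/-- `gchoose (n - i - 1) (n - 2 i)` is the coefficient of `tⁿ⁻²ⁱ` in `(1 - t)⁻ⁱ`; the convention
`gchoose (-1) 0 = 1` is what makes this hold at `n = i = 0`. -/
theorem coeff_s_mul_X_pow (n i : ℕ) :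
    coeff n ((s * X) ^ i)
      = if i < n / 2 + 1 then (gchoose ((n : ℤ) - i - 1) ((n : ℤ) - 2 * i) : ℚ) else 0 := by
  have h1 : (s * X) ^ i = X ^ (2 * i) * (mk 1 : PowerSeries ℚ) ^ i := by rw [s]; ring
  rw [h1, coeff_X_pow_mul']
  by_cases hi : 2 * i ≤ n
  · rw [if_pos hi, if_pos (by omega)]
    obtain ⟨k, rfl⟩ := Nat.exists_eq_add_of_le hi
    have e2 : ((2 * i + k : ℕ) : ℤ) - 2 * i = k := by push_cast; ring
    rw [e2, Nat.add_sub_cancel_left]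
    cases i with
    | zero =>
      rw [pow_zero, coeff_one, gchoose]
      have : ¬ ((0 : ℤ) ≤ k ∧ (k : ℤ) ≤ ((2 * 0 + k : ℕ) : ℤ) - (0 : ℕ) - 1) := by
        push_cast; omega
      rw [if_neg this]
      by_cases hk : k = 0 <;> simp [hk]
    | succ d =>
      have e1 : ((2 * (d + 1) + k : ℕ) : ℤ) - (d + 1 : ℕ) - 1 = (d + k : ℕ) := by
        push_cast; ring
      rw [e1, gchoose, if_pos (by push_cast; omega), mk_one_pow_eq_mk_choose_add, coeff_mk]
      simp only [Int.toNat_natCast, Int.cast_natCast]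
      rw [Nat.choose_symm_add]
  · rw [if_neg hi, if_neg (by omega)]

theorem coeff_φ_pow (n : ℕ) :
    coeff n (φ ^ (n + 1)) = ∑ i ∈ Finset.range (n / 2 + 1),
      (Nat.choose (2 * n + 2) i : ℚ) * (gchoose ((n : ℤ) - i - 1) ((n : ℤ) - 2 * i) : ℚ) := by
  rw [φ, ← pow_mul, add_comm, add_pow, map_sum, show 2 * (n + 1) = 2 * n + 2 by ring]
  have h1 : ∀ i, coeff n ((s * X) ^ i * 1 ^ (2 * n + 2 - i) *
      ((Nat.choose (2 * n + 2) i : ℕ) : PowerSeries ℚ))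
      = if i < n / 2 + 1 then (Nat.choose (2 * n + 2) i : ℚ) *
        (gchoose ((n : ℤ) - i - 1) ((n : ℤ) - 2 * i) : ℚ) else 0 := by
    intro i
    rw [one_pow, mul_one, ← map_natCast (C (R := ℚ)), coeff_mul_C, coeff_s_mul_X_pow]
    split_ifs <;> ring
  simp only [h1]
  rw [← Finset.sum_filter]
  congr 1
  ext i
  simp only [Finset.mem_filter, Finset.mem_range]
  omega

end Basketball

/-- basketball walks of length n are counted by
(1/(n+1))·Σ_{i=0}^{⌊n/2⌋} binom(2n+2, i)·binom(n−i−1, n−2i). -/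
theorem stmt14 (n : ℕ) :
    (Nat.card {p : List (ℤ × ℤ) // IsBasketballWalk p ∧ p.length = n} : ℚ)
      = (1 / (n + 1)) * ∑ i ∈ Finset.range (n / 2 + 1),
          (Nat.choose (2 * n + 2) i : ℚ)
            * (gchoose ((n : ℤ) - i - 1) ((n : ℤ) - 2 * i) : ℚ) := by
  have hcard : Nat.card {p : List (ℤ × ℤ) // IsBasketballWalk p ∧ p.length = n}
      = (Basketball.walks n 0).card := by
    rw [← Nat.card_eq_finsetCard]
    refine Nat.card_congr (Equiv.subtypeEquivRight fun p => ?_)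
    rw [Basketball.mem_walks]
    simp only [IsBasketballWalk, NonnegHeights, pathHeight, zero_add, and_assoc]
  have hw := Basketball.card_walks n 0
  have hl := Basketball.coeff_lagrange n n
  rw [Basketball.K, one_mul, Nat.cast_zero] at hw
  rw [hcard, hw, ← Basketball.coeff_φ_pow, one_div, eq_inv_mul_iff_mul_eq₀ (by positivity), hl]
  ring
end
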